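/- Supercritical (elongated) phase: if μ₁ < ln 6 (equivalently 6e^{−μ₁} > 1), then there exists ε > 0 such that lim_{N→∞} P_N({m : m > εN}) = 1; that is, the boundary length is of order N with probability tending to 1. -/

import Mathlib

/-!
Put `t m = e^{-μ₁ m/2} C₀(N,m)`. With `j = (N-m)/2`, the ratio of consecutive terms is
`t (m+2) / t m = e^{-μ₁} (2m+3j)(j+1)(4m²-1) / ((2m+2j+1)(m+j+1) m (m-1))`,
which is close to `6 e^{-μ₁} > 1` when `m` is small compared with `N`. Quantitatively, it is at
least `6 e^{-μ₁} (1-3δ)` for `m ≤ δN`, `δ ≤ 1/6` and `N ≥ 3/δ` (`C₀_step`, `weight_step`), and this bound is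
some `ρ > 1` once `δ` is small.

Iterating `k = ⌊δN/4⌋` times from any `m ≤ δN/2` never leaves the region `m ≤ δN`, so
`ρ^k t m ≤ t (m+2k)`. Summing over `m ≤ δN/2` and using that the shift by `2k` is injective,
the mass of `{m ≤ δN/2}` is at most `ρ^{-k} Θ_N` (`low_mass_le`), which is exponentially small
relative to `Θ_N`. Hence `ε = δ/2` works.
-/

open Finset

/-- `C₀ N m` is the number of rooted triangulations of the disk with `N` triangles and
`m` boundary edges: for `m ≥ 2`, `N ≥ m`, `N ≡ m (mod 2)` and `j = (N−m)/2` it equals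
`2^{j+2}·(2m+3j−1)!·(2m−3)! / ((j+1)!·(2m+2j)!·((m−2)!)²)`, and `0` otherwise. -/
noncomputable def C₀ (N m : ℕ) : ℝ :=
  if 2 ≤ m ∧ m ≤ N ∧ N % 2 = m % 2 then
    (2 : ℝ) ^ ((N - m) / 2 + 2) *
      (Nat.factorial (2 * m + 3 * ((N - m) / 2) - 1) : ℝ) *
      (Nat.factorial (2 * m - 3) : ℝ) /
      ((Nat.factorial ((N - m) / 2 + 1) : ℝ) *
        (Nat.factorial (2 * m + 2 * ((N - m) / 2)) : ℝ) *
        (Nat.factorial (m - 2) : ℝ) ^ 2)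
  else 0

/-- The partition function `Θ_N(μ₁) = Σ_m e^{−μ₁ m/2} C₀(N,m)`. -/
noncomputable def Θ (μ₁ : ℝ) (N : ℕ) : ℝ :=
  ∑ m ∈ Finset.range (N + 1), Real.exp (-μ₁ * m / 2) * C₀ N m

/-- The boundary-length distribution `P_N(m) = e^{−μ₁ m/2} C₀(N,m) / Θ_N(μ₁)`. -/
noncomputable def P (μ₁ : ℝ) (N m : ℕ) : ℝ :=
  Real.exp (-μ₁ * m / 2) * C₀ N m / Θ μ₁ N

open Filter

/-- Probability of a set of boundary lengths, `P_N(A) = Σ_{m∈A} P_N(m)`. -/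
noncomputable def Pset (μ₁ : ℝ) (N : ℕ) (A : Set ℕ) : ℝ :=
  ∑' m : A, P μ₁ N (m : ℕ)

/-! ### Consecutive ratios of `C₀` -/

lemma C₀_nonneg (N m : ℕ) : 0 ≤ C₀ N m := by
  unfold C₀
  split_ifs <;> positivity

lemma C₀_pos {N m : ℕ} (h : 2 ≤ m ∧ m ≤ N ∧ N % 2 = m % 2) : 0 < C₀ N m := by
  unfold C₀
  rw [if_pos h]
  positivity

lemma C₀_eq_zero {N m : ℕ} (h : N < m) : C₀ N m = 0 := by
  unfold C₀
  rw [if_neg (by omega)]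

/-- The formula for `C₀` in the free parameters `n = m - 2` and `j`, without truncated
subtractions. -/
lemma C₀_param (n j : ℕ) : C₀ (n + 2 + 2 * j) (n + 2) =
    (2 : ℝ) ^ (j + 2) * (Nat.factorial (2 * n + 3 * j + 3) : ℝ) * (Nat.factorial (2 * n + 1) : ℝ) /
      ((Nat.factorial (j + 1) : ℝ) * (Nat.factorial (2 * n + 2 * j + 4) : ℝ) *
        (Nat.factorial n : ℝ) ^ 2) := by
  unfold C₀
  rw [if_pos (by omega)]
  have h1 : (n + 2 + 2 * j - (n + 2)) / 2 = j := by omega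
  rw [h1]
  have h2 : 2 * (n + 2) + 3 * j - 1 = 2 * n + 3 * j + 3 := by omega
  have h3 : 2 * (n + 2) - 3 = 2 * n + 1 := by omega
  have h4 : 2 * (n + 2) + 2 * j = 2 * n + 2 * j + 4 := by omega
  have h5 : n + 2 - 2 = n := by omega
  rw [h2, h3, h4, h5]

/-- The exact ratio of consecutive terms, with `m = n + 2` and `N = n + 4 + 2j`. -/
lemma C₀_ratio (n j : ℕ) : C₀ (n + 4 + 2 * j) (n + 4) =
    C₀ (n + 4 + 2 * j) (n + 2) *
      (((2 * n + 3 * j + 7) * (j + 2) * (2 * n + 3) * (2 * n + 5)) /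
        ((2 * n + 2 * j + 7) * (n + j + 4) * (n + 1) * (n + 2))) := by
  have e1 := C₀_param (n + 2) j
  have e2 := C₀_param n (j + 1)
  rw [show n + 2 + 2 + 2 * j = n + 4 + 2 * j by ring, show n + 2 + 2 = n + 4 by ring,
    show 2 * (n + 2) + 3 * j + 3 = 2 * n + 3 * j + 6 + 1 by ring,
    show 2 * (n + 2) + 1 = 2 * n + 1 + 1 + 1 + 1 + 1 by ring,
    show 2 * (n + 2) + 2 * j + 4 = 2 * n + 2 * j + 6 + 1 + 1 by ring] at e1
  rw [show n + 2 + 2 * (j + 1) = n + 4 + 2 * j by ring,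
    show 2 * n + 3 * (j + 1) + 3 = 2 * n + 3 * j + 6 by ring,
    show 2 * n + 2 * (j + 1) + 4 = 2 * n + 2 * j + 6 by ring] at e2
  rw [e1, e2]
  have p1 := Nat.factorial_ne_zero (2 * n + 3 * j + 6)
  have p2 := Nat.factorial_ne_zero (2 * n + 2 * j + 6)
  have p3 := Nat.factorial_ne_zero (2 * n + 1)
  have p4 := Nat.factorial_ne_zero n
  have p5 := Nat.factorial_ne_zero (j + 1)
  simp only [Nat.factorial_succ (2 * n + 3 * j + 6), Nat.factorial_succ (2 * n + 1 + 1 + 1 + 1),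
    Nat.factorial_succ (2 * n + 1 + 1 + 1), Nat.factorial_succ (2 * n + 1 + 1),
    Nat.factorial_succ (2 * n + 1), Nat.factorial_succ (2 * n + 2 * j + 6 + 1),
    Nat.factorial_succ (2 * n + 2 * j + 6), Nat.factorial_succ (n + 1), Nat.factorial_succ n,
    Nat.factorial_succ (j + 1)]
  generalize Nat.factorial (2 * n + 3 * j + 6) = A at *
  generalize Nat.factorial (2 * n + 2 * j + 6) = B at *
  generalize Nat.factorial (2 * n + 1) = C at *
  generalize Nat.factorial n = D at *
  generalize Nat.factorial (j + 1) = E at *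
  push_cast
  have q1 : (2 * n + 2 * j + 6 + 1 : ℝ) ≠ 0 := by positivity
  have q2 : (2 * n + 2 * j + 6 + 1 + 1 : ℝ) ≠ 0 := by positivity
  have q3 : (2 * n + 2 * j + 7 : ℝ) ≠ 0 := by positivity
  have q4 : (n + j + 4 : ℝ) ≠ 0 := by positivity
  have q5 : (n + 1 : ℝ) ≠ 0 := by positivity
  have q6 : (n + 1 + 1 : ℝ) ≠ 0 := by positivity
  have q7 : (n + 2 : ℝ) ≠ 0 := by positivity
  have q8 : (j + 1 + 1 : ℝ) ≠ 0 := by positivity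
  have r2 : (B : ℝ) ≠ 0 := by exact_mod_cast p2
  have r4 : (D : ℝ) ≠ 0 := by exact_mod_cast p4
  have r5 : (E : ℝ) ≠ 0 := by exact_mod_cast p5
  rw [div_mul_div_comm, div_eq_div_iff (by positivity) (by positivity)]
  ring

/-- For `m ≤ δN`, each step `m ↦ m + 2` multiplies `C₀ N` by at least `6 (1 - 3δ)`. The
three factors of the ratio are bounded by `3/2 (1 - δ)`, `1 - 2δ` and `4`. Inadmissible `m` are
included, since there `C₀ N m = 0`. -/
lemma C₀_step {δ : ℝ} (hδ : 0 < δ) (hδ' : δ ≤ 1 / 6) {N m : ℕ} (hN : 3 ≤ δ * N)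
    (hm : (m : ℝ) ≤ δ * N) : 6 * (1 - 3 * δ) * C₀ N m ≤ C₀ N (m + 2) := by
  by_cases h : 2 ≤ m ∧ m ≤ N ∧ N % 2 = m % 2
  swap
  · have h0 : C₀ N m = 0 := by
      unfold C₀
      rw [if_neg h]
    rw [h0, mul_zero]
    exact C₀_nonneg _ _
  have hN0 : (0 : ℝ) ≤ N := Nat.cast_nonneg N
  have hlt : m + 2 ≤ N := by
    have : (m : ℝ) + 2 ≤ N := by nlinarith
    exact_mod_cast this
  obtain ⟨n, rfl⟩ := Nat.exists_eq_add_of_le' h.1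
  obtain ⟨j, rfl⟩ : ∃ j, N = n + 4 + 2 * j := ⟨(N - (n + 4)) / 2, by omega⟩
  rw [show n + 2 + 2 = n + 4 by ring, C₀_ratio, mul_comm]
  refine mul_le_mul_of_nonneg_left ?_ (C₀_nonneg _ _)
  push_cast at hm hN
  have hn : (0 : ℝ) ≤ n := Nat.cast_nonneg n
  have hj : (0 : ℝ) ≤ j := Nat.cast_nonneg j
  have f1 : 3 / 2 * (1 - δ) ≤ (2 * n + 3 * j + 7 : ℝ) / (2 * n + 2 * j + 7) := by
    rw [le_div_iff₀ (by positivity)]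
    nlinarith [mul_nonneg hδ.le hn]
  have f2 : 1 - 2 * δ ≤ (j + 2 : ℝ) / (n + j + 4) := by
    rw [le_div_iff₀ (by positivity)]
    nlinarith [mul_nonneg hδ.le hn]
  have f3 : 4 ≤ ((2 * n + 3) * (2 * n + 5) : ℝ) / ((n + 1) * (n + 2)) := by
    rw [le_div_iff₀ (by positivity)]
    nlinarith
  have f12 := mul_le_mul f1 f2 (by linarith) (by positivity)
  have f123 := mul_le_mul f12 f3 (by norm_num) (by positivity)
  have e : (2 * n + 3 * j + 7 : ℝ) / (2 * n + 2 * j + 7) * ((j + 2 : ℝ) / (n + j + 4)) *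
      (((2 * n + 3) * (2 * n + 5) : ℝ) / ((n + 1) * (n + 2))) =
      (((2 * n + 3 * j + 7) * (j + 2) * (2 * n + 3) * (2 * n + 5)) /
        ((2 * n + 2 * j + 7) * (n + j + 4) * (n + 1) * (n + 2))) := by
    rw [div_mul_div_comm, div_mul_div_comm]
    congr 1 <;> ring
  rw [e] at f123
  nlinarith [sq_nonneg δ]

/-! ### Boltzmann weights and the mass of short boundaries -/

/-- The unnormalised weight `e^{-μ₁ m/2} C₀(N,m)`. -/
noncomputable def weight (μ₁ : ℝ) (N m : ℕ) : ℝ := Real.exp (-μ₁ * m / 2) * C₀ N m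

lemma weight_nonneg (μ₁ : ℝ) (N m : ℕ) : 0 ≤ weight μ₁ N m :=
  mul_nonneg (Real.exp_pos _).le (C₀_nonneg _ _)

lemma Θ_pos (μ₁ : ℝ) {N : ℕ} (hN : 2 ≤ N) : 0 < Θ μ₁ N := by
  refine Finset.sum_pos' (fun m _ => weight_nonneg μ₁ N m) ⟨N, by simp, ?_⟩
  exact mul_pos (Real.exp_pos _) (C₀_pos ⟨hN, le_rfl, rfl⟩)

lemma weight_step (μ₁ : ℝ) {δ : ℝ} (hδ : 0 < δ) (hδ' : δ ≤ 1 / 6) {N m : ℕ} (hN : 3 ≤ δ * N)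
    (hm : (m : ℝ) ≤ δ * N) :
    6 * Real.exp (-μ₁) * (1 - 3 * δ) * weight μ₁ N m ≤ weight μ₁ N (m + 2) := by
  have h := C₀_step hδ hδ' hN hm
  have e : Real.exp (-μ₁ * ((m + 2 : ℕ) : ℝ) / 2) =
      Real.exp (-μ₁) * Real.exp (-μ₁ * m / 2) := by
    rw [← Real.exp_add]
    congr 1
    push_cast
    ring
  unfold weight
  rw [e]
  calc _ = Real.exp (-μ₁) * Real.exp (-μ₁ * m / 2) * (6 * (1 - 3 * δ) * C₀ N m) := by ring
    _ ≤ _ := mul_le_mul_of_nonneg_left h (by positivity)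

lemma weight_iterate (μ₁ : ℝ) {δ : ℝ} (hδ : 0 < δ) (hδ' : δ ≤ 1 / 6) {N : ℕ} (hN : 3 ≤ δ * N)
    (m k : ℕ) (hm : (m : ℝ) + 2 * k ≤ δ * N) :
    (6 * Real.exp (-μ₁) * (1 - 3 * δ)) ^ k * weight μ₁ N m ≤ weight μ₁ N (m + 2 * k) := by
  induction k with
  | zero => simp
  | succ k ih =>
    push_cast at hm
    have h1 := ih (by linarith)
    have h2 := weight_step μ₁ hδ hδ' hN (m := m + 2 * k) (by push_cast; linarith)
    have hρ : 0 ≤ 6 * Real.exp (-μ₁) * (1 - 3 * δ) :=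
      mul_nonneg (by positivity) (by linarith)
    calc _ = 6 * Real.exp (-μ₁) * (1 - 3 * δ) *
          ((6 * Real.exp (-μ₁) * (1 - 3 * δ)) ^ k * weight μ₁ N m) := by ring
      _ ≤ _ := (mul_le_mul_of_nonneg_left h1 hρ).trans h2

/-- The shift `m ↦ m + 2k` maps `{m ≤ δN/2}` injectively into the summation range of `Θ`. -/
lemma low_mass_le (μ₁ : ℝ) {δ : ℝ} (hδ : 0 < δ) (hδ' : δ ≤ 1 / 6) {N : ℕ} (hN : 3 ≤ δ * N) :
    (6 * Real.exp (-μ₁) * (1 - 3 * δ)) ^ ⌊δ / 4 * N⌋₊ *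
      ∑ m ∈ range (N + 1) with ¬ δ / 2 * (N : ℝ) < ((m : ℕ) : ℝ), weight μ₁ N m ≤ Θ μ₁ N := by
  set k := ⌊δ / 4 * N⌋₊ with hk
  have hk' : (k : ℝ) ≤ δ / 4 * N := Nat.floor_le (by positivity)
  have hN0 : (0 : ℝ) ≤ N := Nat.cast_nonneg N
  rw [Finset.mul_sum]
  calc _ ≤ ∑ m ∈ range (N + 1) with ¬ δ / 2 * (N : ℝ) < ((m : ℕ) : ℝ),
          weight μ₁ N (m + 2 * k) := by
        refine Finset.sum_le_sum fun m hm => weight_iterate μ₁ hδ hδ' hN m k ?_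
        rw [Finset.mem_filter, not_lt] at hm
        linarith [hm.2]
    _ = ∑ m ∈ Finset.image (fun m => m + 2 * k)
          {m ∈ range (N + 1) | ¬ δ / 2 * (N : ℝ) < ((m : ℕ) : ℝ)}, weight μ₁ N m := by
        rw [Finset.sum_image]
        intro a _ b _ hab
        exact Nat.add_right_cancel hab
    _ ≤ Θ μ₁ N := by
        refine Finset.sum_le_sum_of_subset_of_nonneg ?_ fun m _ _ => weight_nonneg μ₁ N m
        intro x hx
        obtain ⟨m, hm, rfl⟩ := Finset.mem_image.1 hx
        rw [Finset.mem_filter, not_lt] at hm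
        have : (m : ℝ) + 2 * k ≤ N := by nlinarith [hm.2]
        rw [Finset.mem_range, Nat.lt_succ_iff]
        exact_mod_cast this

lemma Pset_eq_one_sub_low (μ₁ c : ℝ) {N : ℕ} (hN : 2 ≤ N) :
    Pset μ₁ N {m : ℕ | c < (m : ℝ)} =
      1 - (∑ m ∈ range (N + 1) with ¬ c < ((m : ℕ) : ℝ), weight μ₁ N m) / Θ μ₁ N := by
  have hΘ := (Θ_pos μ₁ hN).ne'
  have h1 : Pset μ₁ N {m : ℕ | c < (m : ℝ)} =
      (∑ m ∈ range (N + 1) with c < ((m : ℕ) : ℝ), weight μ₁ N m) / Θ μ₁ N := by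
    unfold Pset
    rw [tsum_subtype {m : ℕ | c < (m : ℝ)} (P μ₁ N), tsum_eq_sum (s := range (N + 1)),
      Finset.sum_div, Finset.sum_filter]
    · refine Finset.sum_congr rfl fun m _ => ?_
      simp only [Set.indicator_apply, Set.mem_ofPred_eq]
      rfl
    · intro m hm
      rw [Finset.mem_range, not_lt] at hm
      simp [Set.indicator_apply, P, C₀_eq_zero (show N < m by omega)]
  have h2 := Finset.sum_filter_add_sum_filter_not (range (N + 1))
    (fun m : ℕ => c < (m : ℝ)) (weight μ₁ N)
  have h3 : ∑ m ∈ range (N + 1), weight μ₁ N m = Θ μ₁ N := rfl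
  rw [h1, eq_sub_iff_add_eq, ← add_div, h2, h3, div_self hΘ]

/-- Supercritical (elongated) phase `μ₁ < ln 6`: there exists `ε > 0` with
`P_N({m : m > εN}) → 1`, i.e. the boundary length is of order `N` with probability
tending to `1`. -/
theorem supercritical_phase (μ₁ : ℝ) (hμ : μ₁ < Real.log 6) :
    ∃ ε : ℝ, 0 < ε ∧
      Tendsto (fun N : ℕ => Pset μ₁ N {m : ℕ | ε * (N : ℝ) < (m : ℝ)})
        atTop (nhds 1) := by
  set a := Real.exp (-μ₁) with ha
  have ha6 : 1 < 6 * a := by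
    have h : Real.exp μ₁ < 6 := by
      rwa [Real.lt_log_iff_exp_lt (by norm_num)] at hμ
    have h2 : Real.exp μ₁ * a = 1 := by rw [ha, ← Real.exp_add]; simp
    have h3 : 0 < a := Real.exp_pos _
    nlinarith
  have ha0 : 0 < a := Real.exp_pos _
  -- This `δ` solves `6 a (1 - 3 δ) = (6 a + 1) / 2`, midway between `1` and `6 a`.
  obtain ⟨δ, hδdef⟩ : ∃ δ : ℝ, δ = (1 - 1 / (6 * a)) / 6 := ⟨_, rfl⟩
  have hinv : 1 / (6 * a) < 1 := (div_lt_one (by positivity)).2 ha6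
  have hinv0 : 0 < 1 / (6 * a) := by positivity
  have hδ : 0 < δ := by linarith
  have hδ' : δ ≤ 1 / 6 := by linarith
  have hρeq : 6 * a * (1 - 3 * δ) = (6 * a + 1) / 2 := by
    rw [hδdef]
    field_simp
    ring
  have hρ : 1 < 6 * a * (1 - 3 * δ) := by linarith
  refine ⟨δ / 2, by positivity, ?_⟩
  have hNtop : Tendsto (fun N : ℕ => (N : ℝ)) atTop atTop := tendsto_natCast_atTop_atTop
  have hk : Tendsto (fun N : ℕ => ⌊δ / 4 * (N : ℝ)⌋₊) atTop atTop :=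
    tendsto_nat_floor_atTop.comp (hNtop.const_mul_atTop (by positivity))
  have hlim : Tendsto (fun N : ℕ => 1 - ((6 * a * (1 - 3 * δ)) ^ ⌊δ / 4 * (N : ℝ)⌋₊)⁻¹)
      atTop (nhds 1) := by
    simpa using ((tendsto_pow_atTop_atTop_of_one_lt hρ).comp hk).inv_tendsto_atTop.const_sub 1
  have hlarge : ∀ᶠ N : ℕ in atTop, 3 ≤ δ * (N : ℝ) :=
    (hNtop.const_mul_atTop hδ).eventually_ge_atTop 3
  refine tendsto_of_tendsto_of_tendsto_of_le_of_le' hlim tendsto_const_nhds ?_ ?_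
  · filter_upwards [hlarge, eventually_ge_atTop 2] with N h3 h2
    have hΘ := Θ_pos μ₁ h2
    rw [Pset_eq_one_sub_low μ₁ _ h2]
    refine sub_le_sub_left ?_ 1
    rw [div_le_iff₀ hΘ, inv_mul_eq_div, le_div_iff₀ (by positivity), mul_comm]
    exact low_mass_le μ₁ hδ hδ' h3
  · filter_upwards [eventually_ge_atTop 2] with N h2
    rw [Pset_eq_one_sub_low μ₁ _ h2]
    exact sub_le_self _ (div_nonneg (Finset.sum_nonneg fun m _ => weight_nonneg μ₁ N m)
      (Θ_pos μ₁ h2).le)
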